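/- Let f : ℝ^d → ℝ be L-smooth, let μ > 0, and let f_μ be its uniform smoothing over the unit ball. Then for all x, x̂ ∈ ℝ^d (x̂ being a delayed iterate), ‖∇f_μ(x̂) − ∇f(x)‖² ≤ μ² L² d² / 2 + 2 L² ‖x̂ − x‖². -/

import Mathlib

open MeasureTheory ProbabilityTheory

/-- The uniform distribution on the closed unit ball of `ℝ^d`. -/
noncomputable def uniformBall (d : ℕ) : Measure (EuclideanSpace ℝ (Fin d)) :=
  (volume (Metric.closedBall (0 : EuclideanSpace ℝ (Fin d)) 1))⁻¹ •
    volume.restrict (Metric.closedBall (0 : EuclideanSpace ℝ (Fin d)) 1)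

/-- The uniform distribution on the unit sphere of `ℝ^d`, viewed as a measure on `ℝ^d`. -/
noncomputable def uniformSphere (d : ℕ) : Measure (EuclideanSpace ℝ (Fin d)) :=
  ((volume : Measure (EuclideanSpace ℝ (Fin d))).toSphere Set.univ)⁻¹ •
    Measure.map Subtype.val (volume : Measure (EuclideanSpace ℝ (Fin d))).toSphere

/-!
Differentiating under the integral, `∇f_μ(x̂) = E[∇f(x̂ + μv)]`, so `L`-smoothness gives
`‖∇f_μ(x̂) − ∇f(x̂)‖ ≤ μ L E‖v‖`. In polar coordinates `E‖v‖ = d / (d + 1)`, which is at most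
`d / 2` for every natural number `d`. The triangle inequality through `∇f(x̂)` and
`(a + b)² ≤ 2a² + 2b²` then give the bound.
-/

open Metric Module
open scoped NNReal

section RandomTranslation

variable {E F Ω : Type*} [NormedAddCommGroup E] [NormedAddCommGroup F] [MeasurableSpace Ω]
  {P : Measure Ω} {K : ℝ≥0} {X : Ω → E}

lemma integrable_comp_add_of_lipschitzWith [IsFiniteMeasure P] {g : E → F} (hg : LipschitzWith K g)
    (hX : Integrable X P) (x : E) : Integrable (fun ω ↦ g (x + X ω)) P := by
  have hdom : Integrable (fun ω ↦ ‖g x‖ + K * ‖X ω‖) P :=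
    (integrable_const _).add (hX.norm.const_mul _)
  refine hdom.mono' ?_ (.of_forall fun ω ↦ ?_)
  · exact hg.continuous.comp_aestronglyMeasurable (hX.aestronglyMeasurable.const_add x)
  · calc ‖g (x + X ω)‖ ≤ ‖g x‖ + ‖g (x + X ω) - g x‖ := norm_le_norm_add_norm_sub' _ _
      _ ≤ ‖g x‖ + K * ‖X ω‖ := by
        gcongr
        simpa only [add_sub_cancel_left] using hg.norm_sub_le (x + X ω) x

variable [NormedSpace ℝ E] [NormedSpace ℝ F] {f : E → F}

lemma hasFDerivAt_integral_comp_add [IsFiniteMeasure P] (hf : Differentiable ℝ f)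
    (hf' : LipschitzWith K (fderiv ℝ f)) (hX : Integrable X P) {x : E}
    (hfX : Integrable (fun ω ↦ f (x + X ω)) P) :
    HasFDerivAt (fun y ↦ ∫ ω, f (y + X ω) ∂P) (∫ ω, fderiv ℝ f (x + X ω) ∂P) x := by
  have hdom : Integrable (fun ω ↦ ‖fderiv ℝ f (x + X ω)‖ + K) P :=
    (integrable_comp_add_of_lipschitzWith hf' hX x).norm.add (integrable_const _)
  refine hasFDerivAt_integral_of_dominated_of_fderiv_le
    (F' := fun y ω ↦ fderiv ℝ f (y + X ω)) (ball_mem_nhds x one_pos) ?_ hfX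
    (integrable_comp_add_of_lipschitzWith hf' hX x).aestronglyMeasurable
    (.of_forall fun ω y hy ↦ ?_) hdom (.of_forall fun ω y _ ↦ ?_)
  · exact .of_forall fun y ↦
      hf.continuous.comp_aestronglyMeasurable (hX.aestronglyMeasurable.const_add y)
  · have hyx : ‖y - x‖ ≤ 1 := (mem_ball_iff_norm.1 hy).le
    calc ‖fderiv ℝ f (y + X ω)‖
        ≤ ‖fderiv ℝ f (x + X ω)‖ + ‖fderiv ℝ f (y + X ω) - fderiv ℝ f (x + X ω)‖ :=
          norm_le_norm_add_norm_sub' _ _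
      _ ≤ ‖fderiv ℝ f (x + X ω)‖ + K * ‖y - x‖ := by
          gcongr
          simpa only [add_sub_add_right_eq_sub] using hf'.norm_sub_le (y + X ω) (x + X ω)
      _ ≤ ‖fderiv ℝ f (x + X ω)‖ + K := by
          gcongr
          exact mul_le_of_le_one_right K.coe_nonneg hyx
  · exact (hasFDerivAt_comp_add_right (X ω)).2 (hf (y + X ω)).hasFDerivAt

lemma norm_fderiv_integral_comp_add_sub_fderiv_le [CompleteSpace F] [IsProbabilityMeasure P]
    (hf : Differentiable ℝ f) (hf' : LipschitzWith K (fderiv ℝ f)) (hX : Integrable X P) {x : E}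
    (hfX : Integrable (fun ω ↦ f (x + X ω)) P) :
    ‖fderiv ℝ (fun y ↦ ∫ ω, f (y + X ω) ∂P) x - fderiv ℝ f x‖ ≤ K * ∫ ω, ‖X ω‖ ∂P := by
  have hsub : fderiv ℝ (fun y ↦ ∫ ω, f (y + X ω) ∂P) x - fderiv ℝ f x
      = ∫ ω, (fderiv ℝ f (x + X ω) - fderiv ℝ f x) ∂P := by
    rw [(hasFDerivAt_integral_comp_add hf hf' hX hfX).fderiv,
      integral_sub (integrable_comp_add_of_lipschitzWith hf' hX x) (integrable_const _),
      integral_const, probReal_univ, one_smul]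
  rw [hsub, ← integral_const_mul]
  refine norm_integral_le_of_norm_le (hX.norm.const_mul _) (.of_forall fun ω ↦ ?_)
  simpa only [add_sub_cancel_left] using hf'.norm_sub_le (x + X ω) x

end RandomTranslation

lemma integrable_cond_of_continuousOn {α G : Type*} [TopologicalSpace α] [T2Space α]
    [MeasurableSpace α] [OpensMeasurableSpace α] [NormedAddCommGroup G] {ν : Measure α}
    [IsFiniteMeasureOnCompacts ν] {s : Set α} {g : α → G}
    (hs : IsCompact s) (hνs : ν s ≠ 0) (hg : ContinuousOn g s) : Integrable g ν[|s] :=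
  (hg.integrableOn_compact hs).smul_measure (ENNReal.inv_ne_top.2 hνs)

section UniformSmoothing

variable {E F : Type*} [NormedAddCommGroup E] [NormedSpace ℝ E] [FiniteDimensional ℝ E]
  [MeasurableSpace E] [BorelSpace E] [NormedAddCommGroup F] [NormedSpace ℝ F]
  (ν : Measure E) [ν.IsAddHaarMeasure]

lemma setIntegral_norm_closedBall_zero {r : ℝ} (hr : 0 ≤ r) :
    ∫ v in closedBall 0 r, ‖v‖ ∂ν
      = finrank ℝ E / (finrank ℝ E + 1) * r ^ (finrank ℝ E + 1) * ν.real (ball 0 1) := by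
  rcases subsingleton_or_nontrivial E with _ | _
  · simp [Subsingleton.elim _ (0 : E), finrank_zero_of_subsingleton]
  have hindicator : (closedBall (0 : E) r).indicator (fun v ↦ ‖v‖)
      = fun v ↦ (Set.Iic r).indicator id ‖v‖ := by
    ext v
    simp [Set.indicator]
  have hradial : ∫ y in Set.Ioi (0 : ℝ), y ^ (finrank ℝ E - 1) • (Set.Iic r).indicator id y
      = r ^ (finrank ℝ E + 1) / (finrank ℝ E + 1) := by
    calc ∫ y in Set.Ioi (0 : ℝ), y ^ (finrank ℝ E - 1) • (Set.Iic r).indicator id y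
        = ∫ y in Set.Ioi (0 : ℝ), (Set.Iic r).indicator (fun y ↦ y ^ finrank ℝ E) y := by
          congr! 2 with y
          by_cases hy : y ∈ Set.Iic r <;> simp [hy, pow_sub_one_mul finrank_pos.ne']
      _ = ∫ y in (0 : ℝ)..r, y ^ finrank ℝ E := by
          rw [setIntegral_indicator measurableSet_Iic, Set.Ioi_inter_Iic,
            intervalIntegral.integral_of_le hr]
      _ = r ^ (finrank ℝ E + 1) / (finrank ℝ E + 1) := by simp
  rw [← integral_indicator measurableSet_closedBall, hindicator, integral_fun_norm_addHaar,
    hradial, nsmul_eq_mul, smul_eq_mul]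
  ring

lemma integral_norm_cond_closedBall_zero {r : ℝ} (hr : 0 < r) :
    ∫ v, ‖v‖ ∂ν[|closedBall 0 r] = finrank ℝ E / (finrank ℝ E + 1) * r := by
  have hball : ν.real (ball 0 1) ≠ 0 :=
    (ENNReal.toReal_pos (measure_ball_pos ν 0 one_pos).ne' measure_ball_lt_top.ne).ne'
  rw [ProbabilityTheory.cond, integral_smul_measure, setIntegral_norm_closedBall_zero ν hr.le,
    ENNReal.toReal_inv, ← measureReal_def, Measure.addHaar_real_closedBall ν 0 hr.le, smul_eq_mul]
  field_simp
  ring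

/-- The smoothing `f_μ(x) = E[f (x + μ v)]` of `f` by a vector `v` uniformly distributed, with
respect to the Haar measure `ν`, on the closed unit ball; its law is encoded as `ν` conditioned on
the ball. -/
noncomputable def uniformSmoothing (μ : ℝ) (f : E → F) (x : E) : F :=
  ∫ v, f (x + μ • v) ∂ν[|closedBall 0 1]

lemma norm_fderiv_uniformSmoothing_sub_fderiv_le [CompleteSpace F] {f : E → F} {K : ℝ≥0} (μ : ℝ)
    (hf : Differentiable ℝ f) (hf' : LipschitzWith K (fderiv ℝ f)) (x : E) :
    ‖fderiv ℝ (uniformSmoothing ν μ f) x - fderiv ℝ f x‖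
      ≤ K * (|μ| * (finrank ℝ E / (finrank ℝ E + 1))) := by
  have hpos : ν (closedBall 0 1) ≠ 0 := (measure_closedBall_pos ν 0 one_pos).ne'
  have := cond_isProbabilityMeasure_of_finite hpos measure_closedBall_lt_top.ne
  have hX : Integrable (fun v ↦ μ • v) ν[|closedBall 0 1] :=
    integrable_cond_of_continuousOn (isCompact_closedBall 0 1) hpos (by fun_prop)
  have hfX : Integrable (fun v ↦ f (x + μ • v)) ν[|closedBall 0 1] :=
    integrable_cond_of_continuousOn (isCompact_closedBall 0 1) hpos
      (hf.continuous.comp (by fun_prop)).continuousOn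
  have hmean : ∫ v, ‖μ • v‖ ∂ν[|closedBall 0 1] = |μ| * (finrank ℝ E / (finrank ℝ E + 1)) := by
    simp only [norm_smul, Real.norm_eq_abs, integral_const_mul,
      integral_norm_cond_closedBall_zero ν one_pos, mul_one]
  rw [← hmean]
  exact norm_fderiv_integral_comp_add_sub_fderiv_le hf hf' hX hfX

end UniformSmoothing

lemma natCast_div_natCast_add_one_le_half (n : ℕ) : (n : ℝ) / (n + 1) ≤ n / 2 := by
  rcases n.eq_zero_or_pos with rfl | hn
  · simp
  · have : (1 : ℝ) ≤ n := by exact_mod_cast hn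
    gcongr
    linarith

lemma norm_gradient_sub_gradient {𝕜 E : Type*} [RCLike 𝕜] [NormedAddCommGroup E]
    [InnerProductSpace 𝕜 E] [CompleteSpace E] (f g : E → 𝕜) (x y : E) :
    ‖gradient f x - gradient g y‖ = ‖fderiv 𝕜 f x - fderiv 𝕜 g y‖ := by
  rw [gradient, gradient, ← map_sub, LinearIsometryEquiv.norm_map]

theorem uniform_smoothing_delayed_gradient_bound_general {E F : Type*} [NormedAddCommGroup E]
    [NormedSpace ℝ E] [FiniteDimensional ℝ E] [MeasurableSpace E] [BorelSpace E]
    [NormedAddCommGroup F] [NormedSpace ℝ F] [CompleteSpace F]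
    (ν : Measure E) [ν.IsAddHaarMeasure] (L μ : ℝ) {f : E → F} (hdiff : Differentiable ℝ f)
    (hlip : ∀ x y, ‖fderiv ℝ f x - fderiv ℝ f y‖ ≤ L * ‖x - y‖) (x xhat : E) :
    ‖fderiv ℝ (uniformSmoothing ν μ f) xhat - fderiv ℝ f x‖ ^ 2
      ≤ μ ^ 2 * L ^ 2 * (finrank ℝ E : ℝ) ^ 2 / 2 + 2 * L ^ 2 * ‖xhat - x‖ ^ 2 := by
  -- `|L|` rather than `L`: on the zero space the hypothesis allows a negative `L`.
  have hlip_abs : LipschitzWith (Real.nnabs L) (fderiv ℝ f) := .of_dist_le_mul fun a b ↦ by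
    simpa only [dist_eq_norm, Real.coe_nnabs] using
      (hlip a b).trans (mul_le_mul_of_nonneg_right (le_abs_self L) (norm_nonneg _))
  have hbias : ‖fderiv ℝ (uniformSmoothing ν μ f) xhat - fderiv ℝ f xhat‖
      ≤ |L| * (|μ| * (finrank ℝ E / 2)) :=
    (norm_fderiv_uniformSmoothing_sub_fderiv_le ν μ hdiff hlip_abs xhat).trans <| by
      rw [Real.coe_nnabs]
      gcongr |L| * (|μ| * ?_)
      exact natCast_div_natCast_add_one_le_half _
  have hdelay : ‖fderiv ℝ f xhat - fderiv ℝ f x‖ ≤ |L| * ‖xhat - x‖ :=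
    hlip_abs.norm_sub_le xhat x
  calc ‖fderiv ℝ (uniformSmoothing ν μ f) xhat - fderiv ℝ f x‖ ^ 2
      ≤ (|L| * (|μ| * (finrank ℝ E / 2)) + |L| * ‖xhat - x‖) ^ 2 := by
        gcongr
        exact (norm_sub_le_norm_sub_add_norm_sub _ _ _).trans (add_le_add hbias hdelay)
    _ ≤ 2 * ((|L| * (|μ| * (finrank ℝ E / 2))) ^ 2 + (|L| * ‖xhat - x‖) ^ 2) := add_sq_le
    _ = μ ^ 2 * L ^ 2 * (finrank ℝ E : ℝ) ^ 2 / 2 + 2 * L ^ 2 * ‖xhat - x‖ ^ 2 := by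
        simp only [mul_pow, sq_abs]
        ring

/-- Delayed-iterate bound for uniform smoothing:
`‖∇f_μ(x̂) − ∇f(x)‖² ≤ μ² L² d² / 2 + 2 L² ‖x̂ − x‖²`. -/
theorem uniform_smoothing_delayed_gradient_bound
    (d : ℕ) (L μ : ℝ) (hμ : 0 < μ)
    (f : EuclideanSpace ℝ (Fin d) → ℝ)
    (hdiff : Differentiable ℝ f)
    (hlip : ∀ x y, ‖gradient f x - gradient f y‖ ≤ L * ‖x - y‖)
    (fμ : EuclideanSpace ℝ (Fin d) → ℝ)
    (hfμ : ∀ x, fμ x = ∫ v, f (x + μ • v) ∂(uniformBall d))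
    (x xhat : EuclideanSpace ℝ (Fin d)) :
    ‖gradient fμ xhat - gradient f x‖ ^ 2
      ≤ μ ^ 2 * L ^ 2 * (d : ℝ) ^ 2 / 2 + 2 * L ^ 2 * ‖xhat - x‖ ^ 2 := by
  obtain rfl : fμ = uniformSmoothing volume μ f := funext hfμ
  simp only [norm_gradient_sub_gradient] at hlip ⊢
  simpa only [finrank_euclideanSpace_fin] using
    uniform_smoothing_delayed_gradient_bound_general volume L μ hdiff hlip x xhat
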